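/- Let y = Xβ₀ + ε with X ∈ ℝ^{n×p}, β₀ ∈ ℝ^p, ε ∈ ℝ^n, λ ≥ 0, let β̂ minimize β ↦ (2n)^{−1}||y−Xβ||₂² + λ||β||₁, and set Δ̂ = β̂ − β₀. Then for any S ⊆ {1,…,p} with supp(β₀) ⊆ S: (1/n)||XΔ̂||₂² ≤ (2/n)||X^⊤ε||_∞ ||Δ̂||₁ + 2λ( ||β_{0;S}||₁ − ||β_{0;S} + Δ̂_S||₁ − ||Δ̂_{S^⊥}||₁ ). -/

import Mathlib

/-!
Comparing the objective at the minimizer `β̂` and at `β₀`, with residuals `ε - XΔ` and `ε`,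
gives the basic inequality `(1/n)‖XΔ‖₂² ≤ (2/n)⟨Xᵀε, Δ⟩ + 2λ(‖β₀‖₁ - ‖β̂‖₁)`.
The inner product is bounded by Hölder (`sum_mul_le_linf_mul_l1`), and since `β₀` vanishes
off `S`, the `ℓ₁` norm of `β̂ = β₀ + Δ` splits as `‖β₀_S + Δ_S‖₁ + ‖Δ_{Sᶜ}‖₁`.
-/

open MeasureTheory ProbabilityTheory Finset

noncomputable section

/-- Euclidean (`ℓ₂`) norm of a finitely indexed real vector. -/
def l2 {m : Type*} [Fintype m] (v : m → ℝ) : ℝ := Real.sqrt (∑ i, v i ^ 2)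

/-- `ℓ₁` norm of a finitely indexed real vector. -/
def l1 {m : Type*} [Fintype m] (v : m → ℝ) : ℝ := ∑ i, |v i|

/-- `ℓ∞` norm of a finitely indexed real vector. -/
def linf {m : Type*} [Fintype m] (v : m → ℝ) : ℝ := ⨆ i, |v i|

/-- Matrix-vector multiplication for plain-function matrices. -/
def mvec {m k : Type*} [Fintype k] (M : m → k → ℝ) (v : k → ℝ) : m → ℝ :=
  fun i => ∑ j, M i j * v j

/-- Frobenius norm of a matrix. -/
def frob {m k : Type*} [Fintype m] [Fintype k] (M : m → k → ℝ) : ℝ :=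
  Real.sqrt (∑ i, ∑ j, M i j ^ 2)

/-- `ℓ₂` operator norm of a matrix. -/
def opNorm {m k : Type*} [Fintype m] [Fintype k] (M : m → k → ℝ) : ℝ :=
  sSup {x | ∃ v, l2 v ≤ 1 ∧ x = l2 (mvec M v)}

/-- The sub-Gaussian (ψ₂) norm `|||z|||₂ = inf {t > 0 | E[exp(z²/t²)] ≤ 2}`. -/
def sgNorm {Ω : Type*} [MeasurableSpace Ω] (μ : Measure Ω) (z : Ω → ℝ) : ℝ :=
  sInf {t | 0 < t ∧ (∫ ω, Real.exp (z ω ^ 2 / t ^ 2) ∂μ) ≤ 2}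

/-- A random variable is sub-Gaussian if some `t > 0` witnesses `E[exp(z²/t²)] ≤ 2`. -/
def IsSubG {Ω : Type*} [MeasurableSpace Ω] (μ : Measure Ω) (z : Ω → ℝ) : Prop :=
  ∃ t, 0 < t ∧ (∫ ω, Real.exp (z ω ^ 2 / t ^ 2) ∂μ) ≤ 2

/-- The scaling function `δ(n, r) = √(log r / n)`. -/
def sdelta (n r : ℝ) : ℝ := Real.sqrt (Real.log r / n)

/-- Restriction of a vector to a support set `S` (coordinates outside `S` set to zero). -/
def restr {p : ℕ} (S : Finset (Fin p)) (v : Fin p → ℝ) : Fin p → ℝ :=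
  fun i => if i ∈ S then v i else 0

/-- The restricted-eigenvalue (RE) condition for `M` over the support `S` with
parameters `(κ, α)` : `(1/n)‖Mv‖₂² ≥ κ‖v‖₂²` for all `v` in the cone
`C_α(S) = {v | ‖v_{S^⊥}‖₁ ≤ α ‖v_S‖₁}`. -/
def REcond {n p : ℕ} (M : Fin n → Fin p → ℝ) (S : Finset (Fin p)) (κ α : ℝ) : Prop :=
  ∀ v : Fin p → ℝ, l1 (restr Sᶜ v) ≤ α * l1 (restr S v) →
    (1 / (n : ℝ)) * l2 (mvec M v) ^ 2 ≥ κ * l2 v ^ 2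

/-- The stationary AR(1) Cholesky factor `Ψ₀`: lower triangular, first column
`a (1, ρ, ρ², …, ρ^{n-1})ᵀ` with `a = (1 - ρ²)^{-1/2}`, and `(Ψ₀)_{ij} = ρ^{i-j}`
for `2 ≤ j ≤ i ≤ n`. -/
def Psi0 (n : ℕ) (ρ : ℝ) : Fin n → Fin n → ℝ :=
  fun i j =>
    if (j : ℕ) = 0 then (Real.sqrt (1 - ρ ^ 2))⁻¹ * ρ ^ (i : ℕ)
    else if (j : ℕ) ≤ (i : ℕ) then ρ ^ ((i : ℕ) - (j : ℕ)) else 0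

/-- The AR(1) whitening matrix built from the parameter `ρ`: `R₁₁ = (1-ρ²)^{1/2}`,
`R_tt = 1` for `t ≥ 2`, `R_{t,t-1} = -ρ`, zeros elsewhere. -/
def Rwhiten (n : ℕ) (ρ : ℝ) : Fin n → Fin n → ℝ :=
  fun i j =>
    if i = j then (if (i : ℕ) = 0 then Real.sqrt (1 - ρ ^ 2) else 1)
    else if (i : ℕ) = (j : ℕ) + 1 then -ρ else 0

theorem l2_sq {m : Type*} [Fintype m] (v : m → ℝ) : l2 v ^ 2 = ∑ i, v i ^ 2 :=
  Real.sq_sqrt (Finset.sum_nonneg fun i _ => sq_nonneg (v i))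

/-- Hölder's inequality for the pair `ℓ∞`, `ℓ₁`. -/
theorem sum_mul_le_linf_mul_l1 {m : Type*} [Fintype m] (w v : m → ℝ) :
    ∑ j, w j * v j ≤ linf w * l1 v := by
  unfold linf l1
  rw [Finset.mul_sum]
  refine Finset.sum_le_sum fun j _ => ?_
  calc w j * v j ≤ |w j| * |v j| := by rw [← abs_mul]; exact le_abs_self _
    _ ≤ (⨆ i, |w i|) * |v j| := by
      gcongr
      exact le_ciSup (f := fun i => |w i|) (Set.finite_range _).bddAbove j

/-- LASSO upper bound via Hölder and decomposability: for any `S ⊇ supp(β₀)`,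
`(1/n)‖XΔ̂‖₂² ≤ (2/n)‖X^⊤ε‖_∞‖Δ̂‖₁ + 2λ(‖β_{0;S}‖₁ − ‖β_{0;S} + Δ̂_S‖₁ − ‖Δ̂_{S^⊥}‖₁)`. -/
theorem lasso_general_upper_bound
    (n p : ℕ) (X : Fin n → Fin p → ℝ) (β₀ βhat : Fin p → ℝ) (ε y : Fin n → ℝ)
    (lam : ℝ) (Δ : Fin p → ℝ) (S : Finset (Fin p))
    (hlam : 0 ≤ lam)
    (hy : ∀ i, y i = mvec X β₀ i + ε i)
    (hmin : ∀ b : Fin p → ℝ,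
      1 / (2 * (n : ℝ)) * l2 (fun i => y i - mvec X βhat i) ^ 2 + lam * l1 βhat
        ≤ 1 / (2 * (n : ℝ)) * l2 (fun i => y i - mvec X b i) ^ 2 + lam * l1 b)
    (hΔ : Δ = fun j => βhat j - β₀ j)
    (hsupp : ∀ i, β₀ i ≠ 0 → i ∈ S) :
    (1 / (n : ℝ)) * l2 (mvec X Δ) ^ 2
      ≤ (2 / (n : ℝ)) * linf (fun j => ∑ i, X i j * ε i) * l1 Δ
        + 2 * lam * (l1 (restr S β₀) - l1 (fun i => restr S β₀ i + restr S Δ i)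
          - l1 (restr Sᶜ Δ)) := by
  have hres : ∀ i, y i - mvec X βhat i = ε i - mvec X Δ i := by
    intro i
    have h : mvec X Δ i = mvec X βhat i - mvec X β₀ i := by
      simp only [mvec, hΔ, mul_sub, Finset.sum_sub_distrib]
    rw [hy i, h]
    ring
  have hres₀ : ∀ i, y i - mvec X β₀ i = ε i := fun i => by rw [hy i]; ring
  have hbasic := hmin β₀
  simp only [hres, hres₀, l2_sq] at hbasic
  have hexpand : ∑ i, (ε i - mvec X Δ i) ^ 2
      = ∑ i, ε i ^ 2 - 2 * ∑ i, ε i * mvec X Δ i + ∑ i, mvec X Δ i ^ 2 := by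
    rw [Finset.mul_sum, ← Finset.sum_sub_distrib, ← Finset.sum_add_distrib]
    exact Finset.sum_congr rfl fun i _ => by ring
  have hadj : ∑ i, ε i * mvec X Δ i = ∑ j, (∑ i, X i j * ε i) * Δ j := by
    simp only [mvec, Finset.mul_sum, Finset.sum_mul]
    rw [Finset.sum_comm]
    exact Finset.sum_congr rfl fun j _ => Finset.sum_congr rfl fun i _ => by ring
  have hholder := sum_mul_le_linf_mul_l1 (fun j => ∑ i, X i j * ε i) Δ
  have hβ₀ : l1 (restr S β₀) = l1 β₀ := by
    refine Finset.sum_congr rfl fun i _ => ?_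
    by_cases hi : i ∈ S
    · simp [restr, hi]
    · have h0 : β₀ i = 0 := by_contra fun h => hi (hsupp i h)
      simp [restr, h0]
  have hβhat : l1 (fun i => restr S β₀ i + restr S Δ i) + l1 (restr Sᶜ Δ) = l1 βhat := by
    unfold l1
    rw [← Finset.sum_add_distrib]
    refine Finset.sum_congr rfl fun i _ => ?_
    by_cases hi : i ∈ S
    · simp [restr, hi, hΔ]
    · have h0 : β₀ i = 0 := by_contra fun h => hi (hsupp i h)
      simp [restr, hi, hΔ, h0]
  rw [hexpand, hadj] at hbasic
  rw [l2_sq, hβ₀, sub_sub, hβhat]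
  -- Working with `c = 1 / n` also covers `n = 0`, where `c = 0`.
  have hc : (0 : ℝ) ≤ 1 / n := by positivity
  have h2 : 1 / (2 * (n : ℝ)) = 1 / n / 2 := by rw [mul_comm, div_mul_eq_div_div]
  have h3 : 2 / (n : ℝ) = 2 * (1 / n) := by ring
  rw [h2] at hbasic
  rw [h3]
  have hmul := mul_le_mul_of_nonneg_left hholder hc
  linarith

end
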